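/- Let G be a finite r-regular graph with girth g, equipped with a random label assignment with probabilities (p₀,p). Let u be a vertex with neighbours v₁,…,v_r, and let i ≥ 1 with 2(i+2) < g−2. Then: (i) for every subset J ⊆ {1,…,r}, P(v_j ∉ R_i for all j ∈ J | u ∈ W_{i−1}) = ∏_{j∈J} P(v_j ∉ R_i | u ∈ W_{i−1}); and (ii) for every k ∈ {1,…,r} and every J ⊆ {1,…,r} \ {k}, P(v_j ∉ R_i for all j ∈ J | u ∈ B_{i−1} ∧ v_k ∈ R_{≤i−1}) = ∏_{j∈J} P(v_j ∉ R_i | u ∈ B_{i−1} ∧ v_k ∈ R_{≤i−1}). -/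

import Mathlib

open MeasureTheory ProbabilityTheory Filter Set

namespace InducedForest

variable {V : Type*}

/-- Label `i` is *relevant* for vertex `v` (w.r.t. the label assignment `S`):
either `i = 0` and `0 ∈ S v`, or `i ∈ S v`, no `j < i` is relevant for `v`, and
there is a unique neighbour of `v` having a relevant label strictly smaller than `i`. -/
def Relevant (G : SimpleGraph V) (S : V → Set ℕ) (i : ℕ) : V → Prop :=
  Nat.strongRecOn i (fun i ih v =>
    (i = 0 ∧ 0 ∈ S v) ∨
    (i ∈ S v ∧ (∀ j, (h : j < i) → ¬ ih j h v) ∧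
      (∃! u, G.Adj v u ∧ ∃ j, ∃ h : j < i, ih j h u)))

/-- `v` has some relevant label `≤ l`, i.e. `v ∈ R_{≤ l}`. -/
def RelevantLe (G : SimpleGraph V) (S : V → Set ℕ) (l : ℕ) (v : V) : Prop :=
  ∃ i ≤ l, Relevant G S i v

inductive Colour | white | blue | orange | purple
deriving DecidableEq

open Classical in
/-- The colour of `u` at time `l`. -/
noncomputable def colourAt (G : SimpleGraph V) (S : V → Set ℕ) (l : ℕ) (u : V) : Colour :=
  if RelevantLe G S l u then Colour.purple
  else if ∀ v, G.Adj u v → ¬ RelevantLe G S l v then Colour.white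
  else if ∃! v, G.Adj u v ∧ RelevantLe G S l v then Colour.blue
  else Colour.orange

/-- The set `W_l` of white vertices at time `l`. -/
def White (G : SimpleGraph V) (S : V → Set ℕ) (l : ℕ) : Set V :=
  {u | ¬ RelevantLe G S l u ∧ ∀ v, G.Adj u v → ¬ RelevantLe G S l v}

/-- The set `B_l` of blue vertices at time `l`. -/
def Blue (G : SimpleGraph V) (S : V → Set ℕ) (l : ℕ) : Set V :=
  {u | ¬ RelevantLe G S l u ∧ ∃! v, G.Adj u v ∧ RelevantLe G S l v}
/-- The label assignment determined by a sample point `ω`. -/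
def labels (ω : V → ℕ → Bool) : V → Set ℕ := fun v => {i | ω v i = true}

/-- `μ` is the random label assignment with probabilities `(p₀, p)`: the events
`i ∈ S(v)` are mutually independent, and each has probability `p₀` if `i = 0`
and `p` if `i ≥ 1`. -/
def IsLabelMeasure (μ : Measure (V → ℕ → Bool)) (p₀ p : ℝ) : Prop :=
  IsProbabilityMeasure μ ∧
  iIndepSet (fun q : V × ℕ => {ω : V → ℕ → Bool | ω q.1 q.2 = true}) μ ∧
  ∀ (v : V) (i : ℕ), μ {ω | ω v i = true} = ENNReal.ofReal (if i = 0 then p₀ else p)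

/-- Event that `u` is white at time `l`. -/
def WEv (G : SimpleGraph V) (l : ℕ) (u : V) : Set (V → ℕ → Bool) :=
  {ω | u ∈ White G (labels ω) l}

/-- Event that `u` is blue at time `l`. -/
def BEv (G : SimpleGraph V) (l : ℕ) (u : V) : Set (V → ℕ → Bool) :=
  {ω | u ∈ Blue G (labels ω) l}

/-- Event that `u` has relevant label `i`, i.e. `u ∈ R_i`. -/
def REv (G : SimpleGraph V) (i : ℕ) (u : V) : Set (V → ℕ → Bool) :=
  {ω | Relevant G (labels ω) i u}

/-- Event that `u` has a relevant label `≤ l`, i.e. `u ∈ R_{≤ l}`. -/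
def RLeEv (G : SimpleGraph V) (l : ℕ) (u : V) : Set (V → ℕ → Bool) :=
  {ω | RelevantLe G (labels ω) l u}

/-- `G` is `r`-regular. -/
def IsRegular (G : SimpleGraph V) (r : ℕ) : Prop :=
  ∀ v : V, (G.neighborSet v).ncard = r

/-!
Condition on `u` being white, and let `T` be a finite set of neighbours of `u`. Up to time `n`
neither `u` nor any vertex of `T` has a relevant label, so relevant labels up to `n + 1` stay the
same when the edges between `u` and `T` are deleted. In the graph `H` that remains, the conditioning
becomes an intersection of one event for `u` and one for each `x ∈ T`. Whether `a` has relevant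
label `l` depends only on the labels in the ball of radius `l` around `a`, and in `H` the balls
around `u` and the vertices of `T` are disjoint, since a short path joining two of these vertices
would close up to a short cycle of `G`. So the conditioning and the events in question are
intersections of events from independent σ-algebras, one for each of these vertices, and such
conditioning preserves independence. If instead `u` is blue because of `z ∉ T`, the same argument
applies with the edge `uz` kept.
-/

section Probability

variable {Ω ι κ : Type*} {mΩ : MeasurableSpace Ω} {μ : Measure Ω} {m : ι → MeasurableSpace Ω}

theorem measurableSet_existsUnique_mem {N : Set ι} (hN : N.Countable) {A : ι → Set Ω}
    (hA : ∀ x ∈ N, MeasurableSet (A x)) :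
    MeasurableSet {ω | ∃! x, x ∈ N ∧ ω ∈ A x} := by
  have h : {ω | ∃! x, x ∈ N ∧ ω ∈ A x} =
      ⋃ x ∈ N, A x ∩ ⋂ y ∈ N, ⋂ _ : y ≠ x, (A y)ᶜ := by
    ext ω
    simp only [ExistsUnique, mem_ofPred_eq, mem_iUnion, mem_inter_iff, mem_iInter, mem_compl_iff]
    grind
  rw [h]
  exact .biUnion hN fun x hx => (hA x hx).inter <|
    .biInter hN fun y hy => .iInter fun _ => (hA y hy).compl

theorem iIndep_iSup_of_pairwise_disjoint (hle : ∀ i, m i ≤ mΩ) (hm : iIndep m μ)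
    {S : κ → Set ι} (hS : Pairwise (Function.onFun Disjoint S)) :
    iIndep (fun k => ⨆ i ∈ S k, m i) μ := by
  classical
  have := hm.isProbabilityMeasure
  rw [iIndep_iff]
  intro s
  induction s using Finset.induction_on with
  | empty => simp
  | insert a s ha ih =>
    intro A hA
    have hrest : MeasurableSet[⨆ i ∈ ⋃ k ∈ s, S k, m i] (⋂ k ∈ s, A k) :=
      .biInter s.countable_toSet fun k hk =>
        (biSup_mono fun i hi => mem_biUnion hk hi : ⨆ i ∈ S k, m i ≤ _) _
          (hA k (Finset.mem_insert_of_mem hk))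
    have hdisj : Disjoint (S a) (⋃ k ∈ s, S k) :=
      disjoint_iUnion₂_right.2 fun k hk => hS (ne_of_mem_of_not_mem hk ha).symm
    have hindep := (Indep_iff _ _ μ).1 (indep_iSup_of_disjoint hle hm hdisj) _ _
      (hA a (Finset.mem_insert_self a s)) hrest
    rw [Finset.set_biInter_insert, hindep, Finset.prod_insert ha,
      ih fun k hk => hA k (Finset.mem_insert_of_mem hk)]

theorem iIndepSet_cond_iInter [Finite ι] (hle : ∀ i, m i ≤ mΩ) (hm : iIndep m μ)
    {A C : ι → Set Ω} (hA : ∀ i, MeasurableSet[m i] (A i)) (hC : ∀ i, MeasurableSet[m i] (C i))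
    (hpos : μ (⋂ i, C i) ≠ 0) : iIndepSet A μ[|⋂ i, C i] := by
  have hpair : iIndepFun (fun i ω => (ω ∈ A i, ω ∈ C i)) μ :=
    (iIndepFun_iff_iIndep _ _ _).2 <| iIndep_of_iIndep_of_le hm fun i =>
      measurable_iff_comap_le.1 <|
        (@measurable_mem _ (A i) (m i)).2 (hA i) |>.prodMk <|
          (@measurable_mem _ (C i) (m i)).2 (hC i)
  have hcond : iIndepFun (fun i ω => ω ∈ A i) μ[|⋂ i, (· ∈ C i) ⁻¹' {P : Prop | P}] :=
    iIndepFun.cond (fun i => measurable_mem.2 (hle i _ (hC i))) hpair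
      (fun i => ne_bot_of_le_ne_bot hpos (measure_mono (iInter_subset C i))) fun _ => .of_discrete
  exact (iIndepSet_iff_meas_biInter fun i => hle i _ (hA i)).2 fun s =>
    hcond.measure_inter_preimage_eq_mul s (sets := fun _ => {P : Prop | P}) fun _ _ => .of_discrete

theorem measure_biInter_of_iIndepSet_coe {T : Set ι} {A : ι → Set Ω}
    (h : iIndepSet (fun x : T => A x) μ) {s : Finset κ} {v : κ → ι} (hinj : InjOn v s)
    (hmaps : MapsTo v s T) : μ (⋂ k ∈ s, A (v k)) = ∏ k ∈ s, μ (A (v k)) := by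
  have hprod := (h.precomp (hmaps.restrict_inj.2 hinj)).meas_biInter Finset.univ
  simpa [iInter_subtype, ← Finset.prod_coe_sort s] using hprod

theorem measure_forall_mem_iff_ne_zero {A : ι → Set Ω} (hA : ∀ i, MeasurableSet (A i))
    (hind : iIndepSet A μ) (hprob : ∀ i, μ (A i) ∈ Ioo 0 1) (F : Finset ι) (L : Set ι) :
    μ {ω | ∀ i ∈ F, ω ∈ A i ↔ i ∈ L} ≠ 0 := by
  classical
  have := hind.isProbabilityMeasure
  let B (i : ι) : Set Ω := if i ∈ L then A i else (A i)ᶜ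
  have hB : ∀ i, MeasurableSet[MeasurableSpace.generateFrom {A i}] (B i) := fun i => by
    have hAi : MeasurableSet[MeasurableSpace.generateFrom {A i}] (A i) :=
      MeasurableSpace.measurableSet_generateFrom rfl
    by_cases hi : i ∈ L <;> simp [B, hi, hAi, hAi.compl]
  have heq : {ω | ∀ i ∈ F, ω ∈ A i ↔ i ∈ L} = ⋂ i ∈ F, B i := by
    ext ω
    simp only [mem_ofPred_eq, mem_iInter]
    refine forall₂_congr fun i _ => ?_
    by_cases hi : i ∈ L <;> simp [B, hi]
  rw [heq, (iIndepSet_iff _ _).1 hind F fun i _ => hB i, Finset.prod_ne_zero_iff]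
  intro i _
  by_cases hi : i ∈ L
  · simpa [B, hi] using (hprob i).1.ne'
  · simpa [B, hi, prob_compl_eq_one_sub (hA i), tsub_eq_zero_iff_le] using (hprob i).2.not_ge

end Probability

section Detach
open SimpleGraph

variable {G : SimpleGraph V}

theorem egirth_le_edist_deleteEdges_add_one {a b : V} (h : G.Adj a b) :
    G.egirth ≤ (G.deleteEdges {s(a, b)}).edist b a + 1 := by
  classical
  by_cases htop : (G.deleteEdges {s(a, b)}).edist b a = ⊤
  · simp [htop]
  obtain ⟨w, hw⟩ := exists_walk_of_edist_ne_top htop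
  set c := w.bypass.mapLe (G.deleteEdges_le {s(a, b)})
  have hc : (Walk.cons h c).IsCycle := by
    refine (Walk.cons_isCycle_iff _ h).2 ⟨w.bypass_isPath.mapLe _, fun hmem => ?_⟩
    rw [Walk.edges_mapLe_eq_edges] at hmem
    simpa using w.bypass.edges_subset_edgeSet hmem
  calc G.egirth ≤ (Walk.cons h c).length := egirth_le_length hc
    _ = (w.bypass.length : ℕ∞) + 1 := by simp [c]
    _ ≤ (G.deleteEdges {s(a, b)}).edist b a + 1 := by
      rw [← hw]; gcongr; exact w.length_bypass_le_length

theorem ball_subset_ball_add_one_of_adj {w x : V} (h : G.Adj w x) (r : ℕ∞) :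
    G.ball x r ⊆ G.ball w (r + 1) := fun y (hy : G.edist y x < r) => calc
  G.edist y w ≤ G.edist y x + G.edist x w := G.edist_triangle
  _ = G.edist y x + 1 := by rw [edist_eq_one_iff_adj.2 h.symm]
  _ < r + 1 := (ENat.add_lt_add_iff_right ENat.one_ne_top).2 hy

/-- The graph `G` with all edges between `u` and `T` removed. The relevant labels do not see these
edges as long as none of their ends has one, and if `G` has large girth, their ends are far apart
once the edges are gone. -/
def detach (G : SimpleGraph V) (u : V) (T : Set V) : SimpleGraph V :=
  G.deleteEdges ((s(u, ·)) '' T)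

theorem detach_adj {u : V} {T : Set V} {a b : V} :
    (detach G u T).Adj a b ↔ G.Adj a b ∧ ¬ (a = u ∧ b ∈ T) ∧ ¬ (b = u ∧ a ∈ T) := by
  simp only [detach, deleteEdges_adj, Set.mem_image, Sym2.eq_iff]
  grind

theorem detach_le (u : V) (T : Set V) : detach G u T ≤ G :=
  G.deleteEdges_le _

theorem detach_le_deleteEdges_of_mem {u x : V} {T : Set V} (hx : x ∈ T) :
    detach G u T ≤ G.deleteEdges {s(u, x)} :=
  G.deleteEdges_anti (Set.singleton_subset_iff.2 ⟨x, hx, rfl⟩)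

theorem egirth_le_edist_detach_self_add_one {u x : V} {T : Set V} (hT : T ⊆ G.neighborSet u)
    (hx : x ∈ T) : G.egirth ≤ (detach G u T).edist u x + 1 := by
  grw [egirth_le_edist_deleteEdges_add_one (hT hx), edist_comm,
    edist_anti (detach_le_deleteEdges_of_mem hx)]

-- A walk from `x` to `y`, continued along the edge `yu`, joins the ends of `ux` without using it.
theorem egirth_le_edist_detach_add_two {u x y : V} {T : Set V} (hT : T ⊆ G.neighborSet u)
    (hx : x ∈ T) (hy : y ∈ T) (hxy : x ≠ y) : G.egirth ≤ (detach G u T).edist x y + 2 := by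
  have hyu : (G.deleteEdges {s(u, x)}).Adj y u := by
    have hux : u ≠ x := (show G.Adj u x from hT hx).ne
    have huy : G.Adj y u := (hT hy).symm
    simp [huy, hxy.symm, hux]
  calc G.egirth ≤ (G.deleteEdges {s(u, x)}).edist x u + 1 :=
        egirth_le_edist_deleteEdges_add_one (hT hx)
    _ ≤ (detach G u T).edist x y + 1 + 1 := by
      grw [SimpleGraph.edist_triangle (v := y), edist_eq_one_iff_adj.2 hyu,
        edist_anti (detach_le_deleteEdges_of_mem hx)]
    _ = (detach G u T).edist x y + 2 := by rw [add_assoc, one_add_one_eq_two]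

theorem pairwiseDisjoint_ball_detach {u : V} {T : Set V} (hT : T ⊆ G.neighborSet u) {r : ℕ∞}
    (hr : 2 * r < G.egirth) : (insert u T).PairwiseDisjoint fun a => (detach G u T).ball a r := by
  intro a ha b hb hab
  refine Set.disjoint_left.2 fun y hya hyb => hr.not_ge ?_
  have hle : G.egirth ≤ (detach G u T).edist a b + 2 := by
    rcases ha with rfl | ha <;> rcases hb with rfl | hb
    · exact (hab rfl).elim
    · grw [egirth_le_edist_detach_self_add_one hT hb]; gcongr; norm_num
    · grw [egirth_le_edist_detach_self_add_one hT ha, edist_comm]; gcongr; norm_num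
    · exact egirth_le_edist_detach_add_two hT ha hb hab
  calc G.egirth ≤ (detach G u T).edist a b + 2 := hle
    _ ≤ (detach G u T).edist y a + (detach G u T).edist y b + 2 := by
      grw [SimpleGraph.edist_triangle (v := y), edist_comm (u := a)]
    _ = ((detach G u T).edist y a + 1) + ((detach G u T).edist y b + 1) := by ring
    _ ≤ r + r := add_le_add (Order.add_one_le_of_lt hya) (Order.add_one_le_of_lt hyb)
    _ = 2 * r := (two_mul r).symm

end Detach

section Relevance

variable {G H : SimpleGraph V} {S : V → Set ℕ} {l n : ℕ} {u w z : V} {T : Set V}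

theorem relevant_iff : Relevant G S l w ↔
    (l = 0 ∧ 0 ∈ S w) ∨ (l ∈ S w ∧ (∀ j < l, ¬ Relevant G S j w) ∧
      ∃! x, G.Adj w x ∧ ∃ j < l, Relevant G S j x) := by
  unfold Relevant
  rw [Nat.strongRecOn_eq]
  simp only [exists_prop]

theorem Relevant.mem (h : Relevant G S l w) : l ∈ S w := by
  rcases relevant_iff.1 h with ⟨rfl, hS⟩ | ⟨hS, -⟩ <;> exact hS

theorem relevant_zero : Relevant G S 0 w ↔ 0 ∈ S w :=
  ⟨Relevant.mem, fun h => relevant_iff.2 (.inl ⟨rfl, h⟩)⟩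

theorem relevant_congr_of_le
    (h : ∀ a b, RelevantLe G S n b → (G.Adj a b ↔ H.Adj a b)) (hl : l ≤ n + 1) :
    Relevant G S l w ↔ Relevant H S l w := by
  induction l using Nat.strong_induction_on generalizing w with
  | _ l ih =>
    have hpast : ∀ x, (∃ j < l, Relevant G S j x) ↔ ∃ j < l, Relevant H S j x := fun x =>
      exists_congr fun j => and_congr_right fun hj => ih j hj (hj.le.trans hl)
    have hnbr : ∀ x, (G.Adj w x ∧ ∃ j < l, Relevant G S j x) ↔
        H.Adj w x ∧ ∃ j < l, Relevant H S j x := fun x => by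
      rw [← hpast]
      exact and_congr_left fun ⟨j, hj, hx⟩ => h w x ⟨j, by lia, hx⟩
    rw [relevant_iff, relevant_iff (G := H)]
    simp only [hnbr]
    refine or_congr_right (and_congr_right fun _ => and_congr_left fun _ => ?_)
    exact forall₂_congr fun j hj => not_congr (ih j hj (hj.le.trans hl))

theorem relevantLe_congr
    (h : ∀ a b, RelevantLe G S n b → (G.Adj a b ↔ H.Adj a b)) :
    RelevantLe G S n w ↔ RelevantLe H S n w :=
  exists_congr fun _ => and_congr_right fun hl =>
    relevant_congr_of_le h (hl.trans n.le_succ)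

/-- Neither `u` nor any vertex of `T` has a relevant label `≤ n`. In this situation `G` and
`detach G u T` have the same relevant labels `≤ n + 1`. -/
def Dormant (G : SimpleGraph V) (S : V → Set ℕ) (n : ℕ) (u : V) (T : Set V) : Prop :=
  ¬ RelevantLe G S n u ∧ ∀ x ∈ T, ¬ RelevantLe G S n x

theorem Dormant.adj_iff_detach_adj (h : Dormant H S n u T) (a b : V) (hb : RelevantLe H S n b) :
    G.Adj a b ↔ (detach G u T).Adj a b := by
  have hbu : b ≠ u := by rintro rfl; exact h.1 hb
  have hbT : b ∉ T := fun hbT => h.2 b hbT hb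
  simp [detach_adj, hbu, hbT]

theorem dormant_congr (h : ∀ w, RelevantLe G S n w ↔ RelevantLe H S n w) :
    Dormant G S n u T ↔ Dormant H S n u T := by
  simp only [Dormant, h]

theorem dormant_detach_iff : Dormant (detach G u T) S n u T ↔ Dormant G S n u T :=
  ⟨fun h => (dormant_congr fun _ => relevantLe_congr fun a b hb =>
      (h.adj_iff_detach_adj a b hb).symm).1 h,
    fun h => (dormant_congr fun _ => relevantLe_congr h.adj_iff_detach_adj).1 h⟩

theorem Dormant.relevant_detach_iff (h : Dormant G S n u T) (hl : l ≤ n + 1) :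
    Relevant (detach G u T) S l w ↔ Relevant G S l w :=
  (relevant_congr_of_le h.adj_iff_detach_adj hl).symm

theorem Dormant.relevantLe_detach_iff (h : Dormant G S n u T) :
    RelevantLe (detach G u T) S n w ↔ RelevantLe G S n w :=
  (relevantLe_congr h.adj_iff_detach_adj).symm

theorem Dormant.detach_adj_and_relevantLe_iff (h : Dormant G S n u T) :
    (detach G u T).Adj u w ∧ RelevantLe G S n w ↔ G.Adj u w ∧ RelevantLe G S n w :=
  and_congr_left fun hw => (h.adj_iff_detach_adj u w hw).symm

theorem mem_white_iff_detach (hT : T ⊆ G.neighborSet u) :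
    u ∈ White G S n ↔
      u ∈ White (detach G u T) S n ∧ ∀ x ∈ T, ¬ RelevantLe (detach G u T) S n x := by
  have hwhite (h : Dormant G S n u T) : u ∈ White (detach G u T) S n ↔ u ∈ White G S n := by
    simp only [White, Set.mem_ofPred_eq, ← not_and, h.relevantLe_detach_iff,
      h.detach_adj_and_relevantLe_iff]
  constructor
  · intro hu
    have h : Dormant G S n u T := ⟨hu.1, fun x hx => hu.2 x (hT hx)⟩
    exact ⟨(hwhite h).2 hu, (dormant_detach_iff.2 h).2⟩
  · rintro ⟨hu, hx⟩
    exact (hwhite (dormant_detach_iff.1 ⟨hu.1, hx⟩)).1 hu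

theorem mem_blue_and_relevantLe_iff_detach (hT : T ⊆ G.neighborSet u) (hz : G.Adj u z)
    (hzT : z ∉ T) :
    u ∈ Blue G S n ∧ RelevantLe G S n z ↔
      (u ∈ Blue (detach G u T) S n ∧ RelevantLe (detach G u T) S n z) ∧
        ∀ x ∈ T, ¬ RelevantLe (detach G u T) S n x := by
  have hblue (h : Dormant G S n u T) : u ∈ Blue (detach G u T) S n ∧
      RelevantLe (detach G u T) S n z ↔ u ∈ Blue G S n ∧ RelevantLe G S n z := by
    simp only [Blue, Set.mem_ofPred_eq, h.relevantLe_detach_iff, h.detach_adj_and_relevantLe_iff]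
  constructor
  · rintro ⟨hu, hzR⟩
    have h : Dormant G S n u T := ⟨hu.1, fun x hx hxR =>
      hzT (hu.2.unique ⟨hz, hzR⟩ ⟨hT hx, hxR⟩ ▸ hx)⟩
    exact ⟨(hblue h).2 ⟨hu, hzR⟩, (dormant_detach_iff.2 h).2⟩
  · rintro ⟨⟨hu, hzR⟩, hx⟩
    exact (hblue (dormant_detach_iff.1 ⟨hu.1, hx⟩)).1 ⟨hu, hzR⟩

end Relevance

section Locality

/-- The event that `i` lies in `S(v)`, where `q = (v, i)`. -/
def labelEvent (q : V × ℕ) : Set (V → ℕ → Bool) :=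
  {ω | ω q.1 q.2 = true}

/-- The σ-algebra generated by the labels of the vertices in `Z`. -/
@[reducible]
def labelAlgebra (Z : Set V) : MeasurableSpace (V → ℕ → Bool) :=
  ⨆ q ∈ Prod.fst ⁻¹' Z, MeasurableSpace.generateFrom {labelEvent q}

theorem labelAlgebra_mono : Monotone (labelAlgebra (V := V)) :=
  fun _ _ h => biSup_mono fun _ hq => h hq

theorem measurableSet_labelEvent (q : V × ℕ) : MeasurableSet (labelEvent q) := by
  have h : Measurable fun ω : V → ℕ → Bool => ω q.1 q.2 := by fun_prop
  exact h (measurableSet_singleton true)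

theorem generateFrom_labelEvent_le (q : V × ℕ) :
    MeasurableSpace.generateFrom {labelEvent q} ≤ MeasurableSpace.pi :=
  MeasurableSpace.generateFrom_le <| by rintro _ rfl; exact measurableSet_labelEvent q

theorem labelAlgebra_le (Z : Set V) : labelAlgebra Z ≤ MeasurableSpace.pi :=
  iSup₂_le fun q _ => generateFrom_labelEvent_le q

theorem measurableSet_labelAlgebra_labelEvent {Z : Set V} {q : V × ℕ} (hq : q.1 ∈ Z) :
    MeasurableSet[labelAlgebra Z] (labelEvent q) :=
  le_iSup₂ (f := fun q _ => MeasurableSpace.generateFrom {labelEvent q}) q hq _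
    (MeasurableSpace.measurableSet_generateFrom rfl)

variable {G : SimpleGraph V}

theorem measurableSet_REv (hG : ∀ w, (G.neighborSet w).Countable) (l : ℕ) (w : V) :
    MeasurableSet[labelAlgebra (G.ball w (l + 1))] (REv G l w) := by
  induction l using Nat.strong_induction_on generalizing w with
  | _ l ih =>
    have hself (i : ℕ) : MeasurableSet[labelAlgebra (G.ball w (l + 1))] (labelEvent (w, i)) :=
      measurableSet_labelAlgebra_labelEvent (SimpleGraph.mem_ball_self (by simp))
    have hpast (j : ℕ) (hj : j < l) :
        MeasurableSet[labelAlgebra (G.ball w (l + 1))] (REv G j w) :=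
      labelAlgebra_mono (SimpleGraph.ball_mono (by gcongr)) _ (ih j hj w)
    have hnbr (x : V) (hx : x ∈ G.neighborSet w) :
        MeasurableSet[labelAlgebra (G.ball w (l + 1))] (⋃ j < l, REv G j x) := by
      refine .iUnion fun j => .iUnion fun hj => labelAlgebra_mono ?_ _ (ih j hj x)
      refine (ball_subset_ball_add_one_of_adj hx _).trans (SimpleGraph.ball_mono ?_)
      gcongr
      exact mod_cast hj
    have hREv : REv G l w = ({_ω | l = 0} ∩ labelEvent (w, 0)) ∪ (labelEvent (w, l) ∩
        ((⋂ j < l, (REv G j w)ᶜ) ∩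
          {ω | ∃! x, x ∈ G.neighborSet w ∧ ω ∈ ⋃ j < l, REv G j x})) := by
      ext ω
      simp only [REv, labelEvent, mem_ofPred_eq, mem_union, mem_inter_iff, mem_iInter, mem_iUnion,
        mem_compl_iff, exists_prop, SimpleGraph.mem_neighborSet]
      exact relevant_iff
    rw [hREv]
    exact ((MeasurableSet.const _).inter (hself 0)).union <| (hself l).inter <|
      (MeasurableSet.iInter fun j => .iInter fun hj => (hpast j hj).compl).inter <|
      measurableSet_existsUnique_mem (hG w) hnbr

theorem measurableSet_RLeEv (hG : ∀ w, (G.neighborSet w).Countable) (n : ℕ) (w : V) :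
    MeasurableSet[labelAlgebra (G.ball w (n + 1))] (RLeEv G n w) := by
  have h : RLeEv G n w = ⋃ j ≤ n, REv G j w := by
    ext ω
    simp [RLeEv, REv, RelevantLe]
  rw [h]
  exact .iUnion fun j => .iUnion fun hj =>
    labelAlgebra_mono (SimpleGraph.ball_mono (by gcongr)) _ (measurableSet_REv hG j w)

theorem measurableSet_RLeEv_of_adj (hG : ∀ w, (G.neighborSet w).Countable) (n : ℕ) {u x : V}
    (hx : G.Adj u x) : MeasurableSet[labelAlgebra (G.ball u (n + 1 + 1))] (RLeEv G n x) :=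
  labelAlgebra_mono (ball_subset_ball_add_one_of_adj hx _) _ (measurableSet_RLeEv hG n x)

theorem measurableSet_WEv (hG : ∀ w, (G.neighborSet w).Countable) (n : ℕ) (u : V) :
    MeasurableSet[labelAlgebra (G.ball u (n + 1 + 1))] (WEv G n u) := by
  have h : WEv G n u = (RLeEv G n u)ᶜ ∩ ⋂ x ∈ G.neighborSet u, (RLeEv G n x)ᶜ := by
    ext ω
    simp [WEv, White, RLeEv]
  rw [h]
  exact (labelAlgebra_mono (SimpleGraph.ball_mono le_self_add) _
    (measurableSet_RLeEv hG n u)).compl.inter <|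
      .biInter (hG u) fun x hx => (measurableSet_RLeEv_of_adj hG n hx).compl

theorem measurableSet_BEv (hG : ∀ w, (G.neighborSet w).Countable) (n : ℕ) (u : V) :
    MeasurableSet[labelAlgebra (G.ball u (n + 1 + 1))] (BEv G n u) := by
  have h : BEv G n u =
      (RLeEv G n u)ᶜ ∩ {ω | ∃! x, x ∈ G.neighborSet u ∧ ω ∈ RLeEv G n x} := by
    ext ω
    simp [BEv, Blue, RLeEv]
  rw [h]
  exact (labelAlgebra_mono (SimpleGraph.ball_mono le_self_add) _
    (measurableSet_RLeEv hG n u)).compl.inter <|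
      measurableSet_existsUnique_mem (hG u) fun x hx => measurableSet_RLeEv_of_adj hG n hx

end Locality

section ConditionalIndependence

variable {G : SimpleGraph V} {μ : Measure (V → ℕ → Bool)} {n : ℕ} {u : V}

theorem iIndep_labelAlgebra {κ : Type*} (hind : iIndepSet labelEvent μ) {Z : κ → Set V}
    (hZ : Pairwise (Function.onFun Disjoint Z)) : iIndep (fun k => labelAlgebra (Z k)) μ :=
  iIndep_iSup_of_pairwise_disjoint generateFrom_labelEvent_le
    ((iIndepSet_iff_iIndep _ _).1 hind) fun _ _ h => (hZ h).preimage Prod.fst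

theorem countable_neighborSet_detach (hG : ∀ w, (G.neighborSet w).Countable) (T : Set V) (w : V) :
    ((detach G u T).neighborSet w).Countable :=
  (hG w).mono fun _ hx => detach_le u T hx

theorem iIndepSet_compl_REv_detach (hG : ∀ w, (G.neighborSet w).Countable)
    (hind : iIndepSet labelEvent μ) (hn : 2 * ((n : ℕ∞) + 2) < G.egirth) {T : Set V}
    (hTfin : T.Finite) (hT : T ⊆ G.neighborSet u) {C : Set (V → ℕ → Bool)}
    (hC : MeasurableSet[labelAlgebra ((detach G u T).ball u (n + 2))] C)
    (hpos : μ (C ∩ ⋂ x ∈ T, (RLeEv (detach G u T) n x)ᶜ) ≠ 0) :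
    iIndepSet (fun x : T => (REv (detach G u T) (n + 1) x)ᶜ)
      μ[|C ∩ ⋂ x ∈ T, (RLeEv (detach G u T) n x)ᶜ] := by
  classical
  set H := detach G u T
  have hH : ∀ w, (H.neighborSet w).Countable := countable_neighborSet_detach hG T
  have : Finite ↥(insert u T) := hTfin.insert u
  let D : V → Set (V → ℕ → Bool) := Function.update (fun x => (RLeEv H n x)ᶜ) u C
  have hDu : D u = C := Function.update_self ..
  have hDT (x : V) (hx : x ∈ T) : D x = (RLeEv H n x)ᶜ := Function.update_of_ne (hT hx).ne' ..
  have hinter : C ∩ ⋂ x ∈ T, (RLeEv H n x)ᶜ = ⋂ a : ↥(insert u T), D a := by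
    rw [← biInter_eq_iInter (insert u T) fun a _ => D a, biInter_insert, hDu,
      iInter₂_congr hDT]
  have hD (a : ↥(insert u T)) : MeasurableSet[labelAlgebra (H.ball a (n + 2))] (D a) := by
    obtain ⟨a, rfl | ha⟩ := a
    · rwa [hDu]
    · rw [hDT a ha]
      exact (labelAlgebra_mono (SimpleGraph.ball_mono (by gcongr; norm_num)) _
        (measurableSet_RLeEv hH n a)).compl
  have hREv (a : V) : MeasurableSet[labelAlgebra (H.ball a (n + 2))] (REv H (n + 1) a)ᶜ := by
    have h := (measurableSet_REv hH (n + 1) a).compl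
    rwa [Nat.cast_add_one, add_assoc, one_add_one_eq_two] at h
  rw [hinter] at hpos ⊢
  exact (iIndepSet_cond_iInter (fun a => labelAlgebra_le _)
    (iIndep_labelAlgebra hind (pairwiseDisjoint_ball_detach hT hn).subtype) (fun a => hREv a) hD
    hpos).precomp (g := inclusion (subset_insert u T)) (inclusion_injective _)

theorem cond_compl_REv_ae_eq_detach {T : Set V} {C : Set (V → ℕ → Bool)} (hC : MeasurableSet C)
    (hdormant : ∀ ω ∈ C, Dormant (detach G u T) (labels ω) n u T) (x : V) :
    (REv G (n + 1) x)ᶜ =ᵐ[μ[|C]] (REv (detach G u T) (n + 1) x)ᶜ := by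
  filter_upwards [ae_cond_mem hC] with ω hω
  exact propext (not_congr
    ((dormant_detach_iff.1 (hdormant ω hω)).relevant_detach_iff le_rfl).symm)

/-- To be applied with `C` the white or the blue event and `D` the same event for the detached
graph. -/
theorem iIndepSet_compl_REv_cond (hG : ∀ w, (G.neighborSet w).Countable)
    (hind : iIndepSet labelEvent μ) (hn : 2 * ((n : ℕ∞) + 2) < G.egirth) {N : Set V}
    (hN : N ⊆ G.neighborSet u) {C : Set (V → ℕ → Bool)} (hpos : μ C ≠ 0)
    (hC : ∀ T ⊆ N, ∃ D ⊆ (RLeEv (detach G u T) n u)ᶜ,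
      MeasurableSet[labelAlgebra ((detach G u T).ball u (n + 2))] D ∧
        C = D ∩ ⋂ x ∈ T, (RLeEv (detach G u T) n x)ᶜ) :
    iIndepSet (fun x : N => (REv G (n + 1) x)ᶜ) μ[|C] := by
  have hmeas (x : N) : MeasurableSet (REv G (n + 1) x)ᶜ :=
    labelAlgebra_le _ _ (measurableSet_REv hG (n + 1) x.1).compl
  refine (iIndepSet_iff_meas_biInter hmeas).2 fun s => ?_
  set T : Set V := Subtype.val '' (s : Set N)
  have hTN : T ⊆ N := Subtype.coe_image_subset N s
  have hTfin : T.Finite := s.finite_toSet.image _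
  obtain ⟨D, hDu, hD, rfl⟩ := hC T hTN
  set C := D ∩ ⋂ x ∈ T, (RLeEv (detach G u T) n x)ᶜ
  have hCmeas : MeasurableSet C := (labelAlgebra_le _ _ hD).inter <|
    .biInter hTfin.countable fun x _ => (labelAlgebra_le _ _
      (measurableSet_RLeEv (countable_neighborSet_detach hG T) n x)).compl
  have hswap := cond_compl_REv_ae_eq_detach (G := G) (μ := μ) (n := n) (u := u) hCmeas
    (T := T) fun ω hω => ⟨hDu hω.1, fun x hx => mem_iInter₂.1 hω.2 x hx⟩
  calc μ[|C] (⋂ x ∈ s, (REv G (n + 1) x)ᶜ)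
      = μ[|C] (⋂ x ∈ s, (REv (detach G u T) (n + 1) x)ᶜ) :=
        measure_congr (Filter.EventuallyEq.countable_bInter s.countable_toSet fun x _ => hswap x)
    _ = ∏ x ∈ s, μ[|C] (REv (detach G u T) (n + 1) x)ᶜ :=
        measure_biInter_of_iIndepSet_coe (A := fun x => (REv (detach G u T) (n + 1) x)ᶜ)
          (iIndepSet_compl_REv_detach hG hind hn hTfin (hTN.trans hN) hD hpos)
          Subtype.val_injective.injOn (mapsTo_image _ _)
    _ = ∏ x ∈ s, μ[|C] (REv G (n + 1) x)ᶜ :=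
        Finset.prod_congr rfl fun x _ => (measure_congr (hswap x)).symm

theorem not_relevant_events_conditionally_independent_general
    (hG : ∀ w, (G.neighborSet w).Countable) (hind : iIndepSet labelEvent μ)
    (hn : 2 * ((n : ℕ∞) + 2) < G.egirth) (u : V) :
    (μ (WEv G n u) ≠ 0 →
      iIndepSet (fun x : G.neighborSet u => (REv G (n + 1) x)ᶜ) μ[|WEv G n u]) ∧
    ∀ z ∈ G.neighborSet u, μ (BEv G n u ∩ RLeEv G n z) ≠ 0 →
      iIndepSet (fun x : ↥(G.neighborSet u \ {z}) => (REv G (n + 1) x)ᶜ)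
        μ[|BEv G n u ∩ RLeEv G n z] := by
  have hcount (T : Set V) := countable_neighborSet_detach (u := u) hG T
  refine ⟨fun hpos => iIndepSet_compl_REv_cond hG hind hn Subset.rfl hpos fun T hT => ?_,
    fun z hz hpos => iIndepSet_compl_REv_cond hG hind hn sdiff_subset hpos fun T hT => ?_⟩
  · refine ⟨WEv (detach G u T) n u, fun ω hω => hω.1, ?_, ?_⟩
    · have h := measurableSet_WEv (hcount T) n u
      rwa [add_assoc, one_add_one_eq_two] at h
    · ext ω
      simpa [WEv, RLeEv] using mem_white_iff_detach hT
  · have hzT : z ∉ T := fun hzT => (hT hzT).2 rfl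
    have hzH : (detach G u T).Adj u z :=
      detach_adj.2 ⟨hz, fun h => hzT h.2, fun h => hz.ne' h.1⟩
    refine ⟨BEv (detach G u T) n u ∩ RLeEv (detach G u T) n z, fun ω hω => hω.1.1, ?_, ?_⟩
    · have h := (measurableSet_BEv (hcount T) n u).inter
        (measurableSet_RLeEv_of_adj (hcount T) n hzH)
      rwa [add_assoc, one_add_one_eq_two] at h
    · ext ω
      simpa [BEv, RLeEv] using
        mem_blue_and_relevantLe_iff_detach (hT.trans sdiff_subset) hz hzT

end ConditionalIndependence

section Positivity

variable {G : SimpleGraph V} {μ : Measure (V → ℕ → Bool)} {u z : V}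

theorem IsLabelMeasure.measure_labelEvent_mem_Ioo {p₀ p : ℝ} (hμ : IsLabelMeasure μ p₀ p)
    (hp₀ : p₀ ∈ Ioo 0 1) (hp : p ∈ Ioo 0 1) (q : V × ℕ) : μ (labelEvent q) ∈ Ioo 0 1 := by
  rw [labelEvent, hμ.2.2, mem_Ioo, ENNReal.ofReal_pos, ENNReal.ofReal_lt_one]
  split_ifs
  exacts [hp₀, hp]

theorem measure_WEv_ne_zero (hu : (G.neighborSet u).Finite) (hind : iIndepSet labelEvent μ)
    (hprob : ∀ q : V × ℕ, μ (labelEvent q) ∈ Ioo 0 1) (n : ℕ) : μ (WEv G n u) ≠ 0 := by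
  let F : Finset (V × ℕ) := (hu.insert u).toFinset ×ˢ Finset.Iic n
  refine ne_bot_of_le_ne_bot
    (measure_forall_mem_iff_ne_zero measurableSet_labelEvent hind hprob F ∅) (measure_mono ?_)
  intro ω hω
  have hnone (x : V) (hx : x ∈ insert u (G.neighborSet u)) : ¬ RelevantLe G (labels ω) n x := by
    rintro ⟨j, hj, hR⟩
    exact (hω (x, j) (by simpa [F, hj] using hx)).1 hR.mem
  exact ⟨hnone u (mem_insert _ _), fun x hx => hnone x (mem_insert_of_mem _ hx)⟩

theorem measure_BEv_inter_RLeEv_ne_zero (hu : (G.neighborSet u).Finite) (hz : G.Adj u z)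
    (hind : iIndepSet labelEvent μ) (hprob : ∀ q : V × ℕ, μ (labelEvent q) ∈ Ioo 0 1) (n : ℕ) :
    μ (BEv G n u ∩ RLeEv G n z) ≠ 0 := by
  let F : Finset (V × ℕ) := (hu.insert u).toFinset ×ˢ Finset.Iic n
  refine ne_bot_of_le_ne_bot (measure_forall_mem_iff_ne_zero measurableSet_labelEvent hind hprob F
    {(z, 0)}) (measure_mono ?_)
  intro ω hω
  have honly (x : V) (hx : x ∈ insert u (G.neighborSet u)) (hxz : x ≠ z) :
      ¬ RelevantLe G (labels ω) n x := by
    rintro ⟨j, hj, hR⟩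
    exact hxz (congrArg Prod.fst ((hω (x, j) (by simpa [F, hj] using hx)).1 hR.mem))
  have hzR : RelevantLe G (labels ω) n z :=
    ⟨0, n.zero_le, relevant_zero.2 ((hω (z, 0) (by simp [F, hz])).2 rfl)⟩
  refine ⟨⟨honly u (mem_insert _ _) hz.ne, z, ⟨hz, hzR⟩, fun x hx => ?_⟩, hzR⟩
  by_contra hxz
  exact honly x (mem_insert_of_mem _ hx.1) hxz hx.2

end Positivity

/-- Conditional on `u ∈ W_{i−1}` (resp. on `u ∈ B_{i−1}` and
`v k ∈ R_{≤ i−1}`), the events that the neighbours of `u` do not get relevant label `i`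
are mutually independent. -/
theorem not_relevant_events_conditionally_independent
    [Fintype V] (r g : ℕ) (G : SimpleGraph V)
    (hreg : IsRegular G r) (hg : (g : ℕ∞) ≤ G.egirth)
    (p₀ p : ℝ) (hp₀ : p₀ ∈ Ioo (0 : ℝ) 1) (hp : p ∈ Ioo (0 : ℝ) 1)
    (μ : Measure (V → ℕ → Bool)) (hμ : IsLabelMeasure μ p₀ p)
    (u : V) (v : Fin r → V) (hadj : ∀ j, G.Adj u (v j)) (hinj : Function.Injective v)
    (i : ℕ) (hi : 1 ≤ i) (hik : 2 * (i + 2) < g - 2) :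
    (∀ J : Finset (Fin r),
      μ[|WEv G (i - 1) u] (⋂ j ∈ J, {ω | ¬ Relevant G (labels ω) i (v j)})
        = ∏ j ∈ J, μ[|WEv G (i - 1) u] {ω | ¬ Relevant G (labels ω) i (v j)}) ∧
    (∀ k : Fin r, ∀ J : Finset (Fin r), k ∉ J →
      μ[|BEv G (i - 1) u ∩ RLeEv G (i - 1) (v k)]
          (⋂ j ∈ J, {ω | ¬ Relevant G (labels ω) i (v j)})
        = ∏ j ∈ J, μ[|BEv G (i - 1) u ∩ RLeEv G (i - 1) (v k)]
            {ω | ¬ Relevant G (labels ω) i (v j)}) := by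
  obtain ⟨n, rfl⟩ : ∃ n, i = n + 1 := ⟨i - 1, by lia⟩
  have hG (w : V) : (G.neighborSet w).Finite := toFinite _
  have hn : 2 * ((n : ℕ∞) + 2) < G.egirth := lt_of_lt_of_le (by norm_cast; lia) hg
  have hprob := hμ.measure_labelEvent_mem_Ioo hp₀ hp
  have hW := measure_WEv_ne_zero (hG u) hμ.2.1 hprob n
  have hB (k : Fin r) := measure_BEv_inter_RLeEv_ne_zero (hG u) (hadj k) hμ.2.1 hprob n
  obtain ⟨hwhite, hblue⟩ := not_relevant_events_conditionally_independent_general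
    (fun w => (hG w).countable) hμ.2.1 hn u
  let A (x : V) : Set (V → ℕ → Bool) := (REv G (n + 1) x)ᶜ
  exact ⟨fun J => measure_biInter_of_iIndepSet_coe (A := A) (hwhite hW) hinj.injOn
      fun j _ => hadj j,
    fun k J hk => measure_biInter_of_iIndepSet_coe (A := A) (hblue (v k) (hadj k) (hB k))
      hinj.injOn fun j hj => ⟨hadj j, hinj.ne (ne_of_mem_of_not_mem hj hk)⟩⟩

end InducedForest
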